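/- Let G be an a-graph with boundary cycle uxvy for the exterior 4-face and let c be a proper 4-coloring of G with c(x) = 1, c(y) ∈ {1, 2}, c(u) = 3, and c(v) ∈ {3, 4}. Then either there is a path between x and y all of whose vertices are colored 1 or 2, or there is a path between u and v all of whose vertices are colored 3 or 4. -/

import Mathlib

open SimpleGraph

/-- A proper vertex-coloring of `G` using at most 4 colors. -/
def IsProper4Coloring {V : Type} (G : SimpleGraph V) (c : V → Fin 4) : Prop :=
  ∀ a b : V, G.Adj a b → c a ≠ c b

/-- The degree of a vertex, as the number of its neighbours. -/
noncomputable def vdeg {V : Type} (G : SimpleGraph V) (w : V) : ℕ :=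
  (G.neighborSet w).ncard

/-- A (combinatorial) planar triangulation: a connected simple graph together with its
set of triangular faces, every edge lying on exactly two faces, satisfying Euler's
formula `v - e + f = 2`. -/
structure PlanarTriangulation (V : Type) [Fintype V] [DecidableEq V] where
  graph : SimpleGraph V
  connected : graph.Connected
  faces : Finset (Finset V)
  faces_card : ∀ f ∈ faces, f.card = 3
  faces_adj : ∀ f ∈ faces, ∀ a ∈ f, ∀ b ∈ f, a ≠ b → graph.Adj a b
  edge_faces : ∀ a b : V, graph.Adj a b →
    (faces.filter fun f => a ∈ f ∧ b ∈ f).card = 2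
  euler : (Fintype.card V : ℤ) - (graph.edgeSet.ncard : ℤ) + (faces.card : ℤ) = 2

/-- An a-graph: a near-triangulation of the plane whose unique non-triangular face is a
4-face with boundary cycle `u x v y`, the pairs `(x,y)` and `(u,v)` being the two pairs
of opposite (non-adjacent) boundary vertices.  All other faces are triangles, every
edge lies on exactly two faces (boundary edges lie on one triangle and the 4-face), and
Euler's formula holds. -/
structure AGraph (V : Type) [Fintype V] [DecidableEq V] where
  graph : SimpleGraph V
  connected : graph.Connected
  u : V
  x : V
  v : V
  y : V
  adj_ux : graph.Adj u x
  adj_xv : graph.Adj x v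
  adj_vy : graph.Adj v y
  adj_yu : graph.Adj y u
  not_adj_xy : ¬ graph.Adj x y
  not_adj_uv : ¬ graph.Adj u v
  x_ne_y : x ≠ y
  u_ne_v : u ≠ v
  faces : Finset (Finset V)
  faces_card : ∀ f ∈ faces, f.card = 3
  faces_adj : ∀ f ∈ faces, ∀ a ∈ f, ∀ b ∈ f, a ≠ b → graph.Adj a b
  edge_faces : ∀ a b : V, graph.Adj a b →
    (faces.filter fun f => a ∈ f ∧ b ∈ f).card =
      (if ({a, b} : Finset V) ∈ ({{u, x}, {x, v}, {v, y}, {y, u}} : Finset (Finset V))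
        then 1 else 2)
  euler : (Fintype.card V : ℤ) - (graph.edgeSet.ncard : ℤ) + ((faces.card : ℤ) + 1) = 2

/-- A parented a-graph `G_xy` is an a-graph counterexample if in every proper
4-coloring the designated opposite boundary vertices `x` and `y` get the same color. -/
def IsACounterexample {V : Type} [Fintype V] [DecidableEq V] (G : AGraph V) : Prop :=
  ∀ c : V → Fin 4, IsProper4Coloring G.graph c → c G.x = c G.y

/-- A minimal a-graph counterexample: an a-graph counterexample such that no a-graph
counterexample has fewer vertices. -/
def IsMinimalACounterexample {V : Type} [Fintype V] [DecidableEq V] (G : AGraph V) : Prop :=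
  IsACounterexample G ∧
    ∀ (W : Type) [Fintype W] [DecidableEq W] (H : AGraph W),
      IsACounterexample H → Fintype.card V ≤ Fintype.card W

/-- A minimal counterexample to the 4-color conjecture: a planar triangulation with no
proper 4-coloring such that every planar triangulation of lower order has one. -/
def IsMinimal4CTCounterexample {V : Type} [Fintype V] [DecidableEq V]
    (T : PlanarTriangulation V) : Prop :=
  (¬ ∃ c : V → Fin 4, IsProper4Coloring T.graph c) ∧
    ∀ (W : Type) [Fintype W] [DecidableEq W] (S : PlanarTriangulation W),
      Fintype.card W < Fintype.card V → ∃ c : W → Fin 4, IsProper4Coloring S.graph c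

/-- `b` can be reached from `a` by a walk of `G` all of whose vertices lie in `S`. -/
def ReachableWithin {V : Type} (G : SimpleGraph V) (S : Set V) (a b : V) : Prop :=
  ∃ p : G.Walk a b, ∀ w ∈ p.support, w ∈ S

/-- Removing the vertex set `S` from `G` leaves a disconnected graph. -/
def RemovalDisconnects {V : Type} (G : SimpleGraph V) (S : Set V) : Prop :=
  ∃ a b : V, a ∉ S ∧ b ∉ S ∧ ¬ ReachableWithin G Sᶜ a b

/-- `G` has a separating cycle of length `n`. -/
def HasSeparatingCycle {V : Type} (G : SimpleGraph V) (n : ℕ) : Prop :=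
  ∃ (a : V) (p : G.Walk a a), p.IsCycle ∧ p.length = n ∧
    RemovalDisconnects G {w | w ∈ p.support}

/-- A planar triangulation is internally 6-connected if it has minimum degree 5, no
separating 3-cycles or 4-cycles, and whenever a separating 5-cycle is removed, at least
one of the resulting components consists of a single vertex. -/
def Internally6Connected {V : Type} [Fintype V] [DecidableEq V]
    (T : PlanarTriangulation V) : Prop :=
  (∀ w : V, 5 ≤ vdeg T.graph w) ∧
  ¬ HasSeparatingCycle T.graph 3 ∧
  ¬ HasSeparatingCycle T.graph 4 ∧
  ∀ (a : V) (p : T.graph.Walk a a), p.IsCycle → p.length = 5 →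
    RemovalDisconnects T.graph {w | w ∈ p.support} →
    ∃ z : V, z ∉ p.support ∧
      ∀ b : V, b ∉ p.support → ReachableWithin T.graph {w | w ∉ p.support} z b → b = z

/-- The graph of the parent triangulation `G + xy` of an a-graph `G`. -/
def parentXYGraph {V : Type} [Fintype V] [DecidableEq V] (G : AGraph V) : SimpleGraph V :=
  G.graph ⊔ SimpleGraph.fromEdgeSet {s(G.x, G.y)}

/-- The graph of the parent triangulation `G + uv` of an a-graph `G`. -/
def parentUVGraph {V : Type} [Fintype V] [DecidableEq V] (G : AGraph V) : SimpleGraph V :=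
  G.graph ⊔ SimpleGraph.fromEdgeSet {s(G.u, G.v)}

/-- An a-graph is internally 6a-connected if at least one of its two parent
triangulations is internally 6-connected. -/
def Internally6aConnected {V : Type} [Fintype V] [DecidableEq V] (G : AGraph V) : Prop :=
  ∃ T : PlanarTriangulation V,
    (T.graph = parentXYGraph G ∨ T.graph = parentUVGraph G) ∧ Internally6Connected T

/-- A single Kempe exchange: for some pair of distinct colors `j`, `k`, the colors `j`
and `k` are swapped on a non-empty proper subset of the `j`-`k` Kempe chains (a
non-empty union `U` of connected components of the subgraph induced by the vertices
colored `j` or `k`, with `U` not all of them), all other vertices keeping their color. -/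
def KempeStep {V : Type} (G : SimpleGraph V) (c c' : V → Fin 4) : Prop :=
  ∃ j k : Fin 4, j ≠ k ∧ ∃ U : Set V,
    U.Nonempty ∧
    U ⊆ {w | c w = j ∨ c w = k} ∧
    U ≠ {w | c w = j ∨ c w = k} ∧
    (∀ a ∈ U, ∀ b : V, ReachableWithin G {w | c w = j ∨ c w = k} a b → b ∈ U) ∧
    (∀ w ∈ U, c' w = if c w = j then k else j) ∧
    (∀ w : V, w ∉ U → c' w = c w)

/-- The equivalence relation on colorings generated by Kempe exchanges. -/
def KempeEquiv {V : Type} (G : SimpleGraph V) : (V → Fin 4) → (V → Fin 4) → Prop :=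
  Relation.EqvGen (KempeStep G)

/-- For designated vertices `x`, `y`: no Kempe equivalence class of proper 4-colorings
contains both a non-solution state (`c x = c y`) and a solution state (`c x ≠ c y`).
This is the defining property of the family `A*`. -/
def NoNSClass {V : Type} (G : SimpleGraph V) (x y : V) : Prop :=
  ∀ c c' : V → Fin 4, IsProper4Coloring G c → IsProper4Coloring G c' →
    KempeEquiv G c c' → (c x = c y ↔ c' x = c' y)

/-- The coloring state determined by a coloring: the induced partition of the vertex
set into color classes, recorded as the relation of having equal colors.  Two colorings
represent the same state precisely when they have the same `statePart`. -/
def statePart {V : Type} (c : V → Fin 4) : V → V → Prop :=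
  fun a b => c a = c b

/-- The four boundary vertices of an a-graph. -/
def boundaryFinset {V : Type} [Fintype V] [DecidableEq V] (G : AGraph V) : Finset V :=
  {G.u, G.x, G.v, G.y}

/-- The interior vertices of an a-graph: those not on the boundary 4-cycle. -/
def interiorFinset {V : Type} [Fintype V] [DecidableEq V] (G : AGraph V) : Finset V :=
  Finset.univ \ boundaryFinset G

open Classical in
/-- The inner ring of an a-graph: the interior vertices adjacent to some boundary
vertex. -/
noncomputable def innerRingFinset {V : Type} [Fintype V] [DecidableEq V]
    (G : AGraph V) : Finset V :=
  (interiorFinset G).filter fun w => ∃ b ∈ boundaryFinset G, G.graph.Adj w b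

/-- `G` belongs to the family `G(m,n)`: its inner ring has order `n` and encloses `m`
further interior vertices. -/
def InFamilyG {V : Type} [Fintype V] [DecidableEq V] (G : AGraph V) (m n : ℕ) : Prop :=
  (innerRingFinset G).card = n ∧ (interiorFinset G \ innerRingFinset G).card = m

/-- The icosahedron, the unique 5-regular planar triangulation, on 12 vertices. -/
def icosG : SimpleGraph (Fin 12) :=
  SimpleGraph.fromEdgeSet
    {s(0, 1), s(0, 2), s(0, 3), s(0, 4), s(0, 5),
     s(1, 2), s(2, 3), s(3, 4), s(4, 5), s(5, 1),
     s(11, 6), s(11, 7), s(11, 8), s(11, 9), s(11, 10),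
     s(6, 7), s(7, 8), s(8, 9), s(9, 10), s(10, 6),
     s(1, 6), s(1, 10), s(2, 6), s(2, 7), s(3, 7),
     s(3, 8), s(4, 8), s(4, 9), s(5, 9), s(5, 10)}

/-- The order-12 a-graph `G*`: the icosahedron with the edge `uv = {0,1}` deleted.
Its boundary 4-cycle is `u x v y = 0 2 1 5`, so `(x, y) = (2, 5)` and
`(u, v) = (0, 1)` are the two pairs of opposite boundary vertices. -/
def gstarG : SimpleGraph (Fin 12) := icosG.deleteEdges {s(0, 1)}

/-- The boundary vertex `u` of `G*`. -/
def gstarU : Fin 12 := 0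
/-- The boundary vertex `v` of `G*`. -/
def gstarV : Fin 12 := 1
/-- The boundary vertex `x` of `G*`. -/
def gstarX : Fin 12 := 2
/-- The boundary vertex `y` of `G*`. -/
def gstarY : Fin 12 := 5

/-!
Split the vertices into a set `A` containing `x`, `y` and its complement containing `u`, `v`. Let
`S` be the set of vertices reachable from `x` inside `A` and `T` the set of vertices reachable from
`u` outside `A`. A face meeting both `S` and `T` is a clique, so it is covered by `S` and `T`; since
it has an odd number of vertices, it contains an even number of pairs in `S × T`. Counting
incidences between faces and pairs in `S × T`, an even number of those pairs lie on an odd number of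
faces. But a pair on an odd number of faces joins boundary vertices, and if `y ∉ S` and `v ∉ T`, the
only such pair is `(x, u)`.
-/

section PairDegree

open Finset

variable {V : Type*} [DecidableEq V] {F : Finset (Finset V)} {f S T : Finset V} {a b : V}

/-- The codegree of `a` and `b` in the set family `F`: the number of members of `F` containing both.
When `F` consists of the faces of a plane graph and `ab` is an edge, this is the number of faces in
`F` on that edge. -/
def pairDegree (F : Finset (Finset V)) (a b : V) : ℕ :=
  #{f ∈ F | a ∈ f ∧ b ∈ f}

lemma pairDegree_comm (F : Finset (Finset V)) (a b : V) : pairDegree F a b = pairDegree F b a := by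
  simp only [pairDegree, and_comm]

lemma exists_mem_of_odd_pairDegree (h : Odd (pairDegree F a b)) : ∃ f ∈ F, a ∈ f ∧ b ∈ f := by
  obtain ⟨f, hf⟩ := card_pos.mp h.pos
  exact ⟨f, mem_filter.mp hf⟩

lemma sum_pairDegree_eq_sum_card_inter_mul_card_inter (F : Finset (Finset V)) (S T : Finset V) :
    ∑ p ∈ S ×ˢ T, pairDegree F p.1 p.2 = ∑ f ∈ F, #(f ∩ S) * #(f ∩ T) := by
  have pairs_in (f : Finset V) : {p ∈ S ×ˢ T | p.1 ∈ f ∧ p.2 ∈ f} = (f ∩ S) ×ˢ (f ∩ T) := by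
    ext p
    simp only [mem_filter, mem_product, mem_inter]
    tauto
  calc ∑ p ∈ S ×ˢ T, pairDegree F p.1 p.2
      = ∑ f ∈ F, #{p ∈ S ×ˢ T | p.1 ∈ f ∧ p.2 ∈ f} :=
        sum_card_bipartiteAbove_eq_sum_card_bipartiteBelow fun (p : V × V) f => p.1 ∈ f ∧ p.2 ∈ f
    _ = ∑ f ∈ F, #(f ∩ S) * #(f ∩ T) := by simp only [pairs_in, card_product]

lemma even_card_inter_mul_card_inter (hf : Odd #f) (hST : Disjoint S T)
    (hcover : (f ∩ S).Nonempty → (f ∩ T).Nonempty → f ⊆ S ∪ T) :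
    Even (#(f ∩ S) * #(f ∩ T)) := by
  rcases (f ∩ S).eq_empty_or_nonempty with hS | hS
  · simp [hS]
  rcases (f ∩ T).eq_empty_or_nonempty with hT | hT
  · simp [hT]
  have card_add : #(f ∩ S) + #(f ∩ T) = #f := by
    rw [← card_union_of_disjoint (hST.mono inter_subset_right inter_subset_right),
      ← inter_union_distrib_left, inter_eq_left.mpr (hcover hS hT)]
  rw [← card_add] at hf
  grind

lemma even_card_filter_odd_pairDegree (hF : ∀ f ∈ F, Odd #f) (hST : Disjoint S T)
    (hcover : ∀ f ∈ F, (f ∩ S).Nonempty → (f ∩ T).Nonempty → f ⊆ S ∪ T) :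
    Even #{p ∈ S ×ˢ T | Odd (pairDegree F p.1 p.2)} := by
  rw [← even_sum_iff_even_card_odd, sum_pairDegree_eq_sum_card_inter_mul_card_inter]
  exact even_sum _ fun f hf => even_card_inter_mul_card_inter (hF f hf) hST (hcover f hf)

end PairDegree

namespace ReachableWithin

variable {V : Type} {G : SimpleGraph V} {A : Set V} {a b w : V}

lemma refl (ha : a ∈ A) : ReachableWithin G A a a :=
  ⟨.nil, by simpa using ha⟩

lemma mem_right (h : ReachableWithin G A a b) : b ∈ A :=
  let ⟨p, hp⟩ := h
  hp b p.end_mem_support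

lemma trans_adj (h : ReachableWithin G A a b) (hbw : G.Adj b w) (hw : w ∈ A) :
    ReachableWithin G A a w := by
  obtain ⟨p, hp⟩ := h
  refine ⟨p.concat hbw, fun z hz => ?_⟩
  rw [Walk.support_concat, List.mem_append, List.mem_singleton] at hz
  rcases hz with hz | rfl
  exacts [hp z hz, hw]

lemma of_mem_clique {f : Set V} (hf : G.IsClique f) (h : ReachableWithin G A a b) (hb : b ∈ f)
    (hwf : w ∈ f) (hw : w ∈ A) : ReachableWithin G A a w := by
  obtain rfl | hne := eq_or_ne b w
  exacts [h, h.trans_adj (hf hb hwf hne) hw]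

end ReachableWithin

-- `ncard` is a genuine cardinality here: each such pair lies in a member of the finite family `F`.
lemma even_ncard_odd_pairDegree_reachableWithin {V : Type} [DecidableEq V] {G : SimpleGraph V}
    {F : Finset (Finset V)} {A : Set V} (x u : V)
    (hodd : ∀ f ∈ F, Odd f.card) (hclique : ∀ f ∈ F, G.IsClique f) :
    Even {p : V × V | ReachableWithin G A x p.1 ∧ ReachableWithin G Aᶜ u p.2 ∧
      Odd (pairDegree F p.1 p.2)}.ncard := by
  classical
  set W := F.biUnion id
  have subset_W {f} (hf : f ∈ F) : f ⊆ W := Finset.subset_biUnion_of_mem id hf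
  set S := W.filter (ReachableWithin G A x) with hS
  set T := W.filter (ReachableWithin G Aᶜ u) with hT
  have disjoint_ST : Disjoint S T := Finset.disjoint_filter.mpr fun w _ hwS hwT =>
    hwT.mem_right hwS.mem_right
  have covered (f) (hf : f ∈ F) (hfS : (f ∩ S).Nonempty) (hfT : (f ∩ T).Nonempty) :
      f ⊆ S ∪ T := by
    obtain ⟨a, ha⟩ := hfS
    obtain ⟨b, hb⟩ := hfT
    simp only [hS, hT, Finset.mem_inter, Finset.mem_filter] at ha hb
    intro w hw
    rw [hS, hT, ← Finset.filter_or, Finset.mem_filter]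
    exact ⟨subset_W hf hw, (em (w ∈ A)).imp (ha.2.2.of_mem_clique (hclique f hf) ha.1 hw)
      (hb.2.2.of_mem_clique (hclique f hf) hb.1 hw)⟩
  convert even_card_filter_odd_pairDegree hodd disjoint_ST covered
  rw [← Set.ncard_coe_finset]
  congr 1
  ext ⟨a, b⟩
  simp only [hS, hT, Set.mem_ofPred_eq, Finset.coe_filter, Finset.mem_product, Finset.mem_filter]
  refine ⟨fun ⟨ha, hb, hab⟩ => ?_, by tauto⟩
  obtain ⟨f, hf, haf, hbf⟩ := exists_mem_of_odd_pairDegree hab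
  exact ⟨⟨⟨subset_W hf haf, ha⟩, subset_W hf hbf, hb⟩, hab⟩

theorem stmt_12_general {V : Type} [DecidableEq V] {G : SimpleGraph V} {F : Finset (Finset V)}
    {u x v y : V} {A : Set V}
    (hodd : ∀ f ∈ F, Odd f.card) (hclique : ∀ f ∈ F, G.IsClique f)
    (hxu : Odd (pairDegree F x u))
    (hboundary : ∀ a b, G.Adj a b → Odd (pairDegree F a b) → a ∈ ({u, x, v, y} : Finset V))
    (hx : x ∈ A) (hy : y ∈ A) (hu : u ∉ A) (hv : v ∉ A) :
    ReachableWithin G A x y ∨ ReachableWithin G Aᶜ u v := by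
  by_contra! ⟨not_xy, not_uv⟩
  suffices odd_pairs : {p : V × V | ReachableWithin G A x p.1 ∧ ReachableWithin G Aᶜ u p.2 ∧
      Odd (pairDegree F p.1 p.2)} = {(x, u)} by
    have := even_ncard_odd_pairDegree_reachableWithin (A := A) x u hodd hclique
    simp [odd_pairs] at this
  refine Set.eq_singleton_iff_unique_mem.mpr ⟨⟨.refl hx, .refl hu, hxu⟩, ?_⟩
  rintro ⟨a, b⟩ ⟨ha, hb, hab⟩
  obtain ⟨f, hf, haf, hbf⟩ := exists_mem_of_odd_pairDegree hab
  have hne : a ≠ b := fun h => hb.mem_right (h ▸ ha.mem_right)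
  have adj_ab : G.Adj a b := hclique f hf haf hbf hne
  have ha_boundary := hboundary a b adj_ab hab
  have hb_boundary := hboundary b a adj_ab.symm (pairDegree_comm F a b ▸ hab)
  simp only [Finset.mem_insert, Finset.mem_singleton] at ha_boundary hb_boundary
  have a_eq_x : a = x := by grind [ha.mem_right]
  have b_eq_u : b = u := by grind [hb.mem_right]
  rw [a_eq_x, b_eq_u]

namespace AGraph

variable {V : Type} [Fintype V] [DecidableEq V] (G : AGraph V)

lemma odd_card_of_mem_faces (f : Finset V) (hf : f ∈ G.faces) : Odd f.card := by
  rw [G.faces_card f hf]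
  decide

lemma isClique_of_mem_faces (f : Finset V) (hf : f ∈ G.faces) : G.graph.IsClique f :=
  fun a ha b hb => G.faces_adj f hf a ha b hb

lemma odd_pairDegree_x_u : Odd (pairDegree G.faces G.x G.u) := by
  rw [pairDegree, G.edge_faces _ _ G.adj_ux.symm, if_pos (by simp [Finset.pair_comm])]
  exact odd_one

lemma mem_boundaryFinset_of_odd_pairDegree (a b : V) (hab : G.graph.Adj a b)
    (hodd : Odd (pairDegree G.faces a b)) : a ∈ boundaryFinset G := by
  rw [pairDegree, G.edge_faces a b hab] at hodd
  split_ifs at hodd with hedge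
  · have ha : a ∈ ({a, b} : Finset V) := Finset.mem_insert_self a {b}
    simp only [Finset.mem_insert, Finset.mem_singleton] at hedge
    simp only [boundaryFinset, Finset.mem_insert, Finset.mem_singleton]
    rcases hedge with h | h | h | h <;> rw [h] at ha <;> grind
  · exact absurd even_two (Nat.not_even_iff_odd.mpr hodd)

end AGraph

/-- Theorem A.1: Let `G` be an a-graph with boundary cycle `u x v y`
and `c` a proper 4-coloring with `c x = 1`, `c y ∈ {1,2}`, `c u = 3`, `c v ∈ {3,4}`
(here colors 1,2,3,4 are the elements 0,1,2,3 of `Fin 4`).  Then there is a path from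
`x` to `y` colored with colors 1 and 2, or a path from `u` to `v` colored with colors
3 and 4. -/
theorem stmt_12 {V : Type} [Fintype V] [DecidableEq V] (G : AGraph V)
    (c : V → Fin 4) (hc : IsProper4Coloring G.graph c)
    (hx : c G.x = 0) (hy : c G.y = 0 ∨ c G.y = 1)
    (hu : c G.u = 2) (hv : c G.v = 2 ∨ c G.v = 3) :
    (∃ p : G.graph.Walk G.x G.y, ∀ w ∈ p.support, c w = 0 ∨ c w = 1) ∨
    (∃ p : G.graph.Walk G.u G.v, ∀ w ∈ p.support, c w = 2 ∨ c w = 3) := by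
  have compl_colors (k : Fin 4) : ¬(k = 0 ∨ k = 1) ↔ k = 2 ∨ k = 3 := by revert k; decide
  simpa only [ReachableWithin, Set.mem_compl_iff, Set.mem_ofPred_eq, compl_colors] using
    stmt_12_general (A := {w | c w = 0 ∨ c w = 1}) G.odd_card_of_mem_faces
      G.isClique_of_mem_faces G.odd_pairDegree_x_u G.mem_boundaryFinset_of_odd_pairDegree
      (.inl hx) hy ((compl_colors _).mpr (.inl hu)) ((compl_colors _).mpr hv)
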